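/- arXiv:2407.05009 — 3 statements merged into one kernel-verified Lean document; each statement's English description precedes it below -/
import Mathlib

section
/- Let L > 0 and let f : [0,L] → ℝ be continuous on [0,L], continuously differentiable on [0,L), with f(x) > 0 for all x ∈ [0,L), f′(x) < 0 for all x ∈ (0,L), and f(L) = 0. Define μ(x) = −f′(x)/f(x) for x ∈ [0,L). Then: (a) μ(x) > 0 for x ∈ (0,L); (b) for every l ∈ (0,L), ∫₀^l μ(s) ds = log(f(0)/f(l)) < ∞; (c) ∫₀ˣ μ(s) ds → ∞ as x → L⁻ (so ∫₀^L μ(s) ds = ∞); and (d) for every x ∈ [0,L), exp(−∫₀ˣ μ(s) ds) = f(x)/f(0); consequently, if f(0) = λ p₀* for constants λ > 0 and p₀* > 0, then λ p₀* exp(−∫₀ˣ μ(s) ds) = f(x) for all x ∈ [0,L). -/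
/-!
The steady-state equation `f' = -μ f` says that `-log f` is an antiderivative of `μ`. Since `f`
decreases, `-log f` is monotone, so its derivative `μ` is integrable on every `[0, l]` with `l < L`
and the fundamental theorem of calculus gives `exp (-∫₀ˣ μ) = f x / f 0`. As `x → L⁻` the
right-hand side tends to `0`, which forces `∫₀ˣ μ → ∞`.
-/

open MeasureTheory Set Filter Topology

section DecayRate

variable {f μ : ℝ → ℝ} {a b : ℝ}

theorem hasDerivAt_neg_log_of_decay {m x : ℝ} (hf : HasDerivAt f (-m * f x) x)
    (hx : f x ≠ 0) : HasDerivAt (fun y => -Real.log (f y)) m x := by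
  have hm : m = -(-m * f x / f x) := by rw [mul_div_cancel_right₀ (-m) hx, neg_neg]
  rw [hm]
  exact (hf.log hx).neg

theorem intervalIntegrable_decayRate (hab : a ≤ b) (hfc : ContinuousOn f (Icc a b))
    (hf : ∀ x ∈ Ioo a b, HasDerivAt f (-μ x * f x) x) (hf0 : ∀ x ∈ Icc a b, f x ≠ 0)
    (hμ : ∀ x ∈ Ioo a b, 0 ≤ μ x) : IntervalIntegrable μ volume a b :=
  (intervalIntegrable_iff_integrableOn_Ioc_of_le hab).2 <|
    intervalIntegral.integrableOn_deriv_of_nonneg (hfc.log hf0).neg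
      (fun x hx => hasDerivAt_neg_log_of_decay (hf x hx) (hf0 x (Ioo_subset_Icc_self hx))) hμ

theorem integral_decayRate_eq_log_div (hab : a ≤ b) (hfc : ContinuousOn f (Icc a b))
    (hf : ∀ x ∈ Ioo a b, HasDerivAt f (-μ x * f x) x) (hf0 : ∀ x ∈ Icc a b, f x ≠ 0)
    (hμ : IntervalIntegrable μ volume a b) : ∫ s in a..b, μ s = Real.log (f a / f b) := by
  have hftc : ∫ s in a..b, μ s = -Real.log (f b) - -Real.log (f a) :=
    intervalIntegral.integral_eq_sub_of_hasDerivAt_of_le hab (hfc.log hf0).neg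
      (fun x hx => hasDerivAt_neg_log_of_decay (hf x hx) (hf0 x (Ioo_subset_Icc_self hx))) hμ
  rw [hftc, Real.log_div (hf0 a (left_mem_Icc.2 hab)) (hf0 b (right_mem_Icc.2 hab))]
  ring

theorem exp_neg_integral_decayRate (hab : a ≤ b) (hfc : ContinuousOn f (Icc a b))
    (hf : ∀ x ∈ Ioo a b, HasDerivAt f (-μ x * f x) x) (hfpos : ∀ x ∈ Icc a b, 0 < f x)
    (hμ : IntervalIntegrable μ volume a b) : Real.exp (-∫ s in a..b, μ s) = f b / f a := by
  have hratio : 0 < f b / f a :=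
    div_pos (hfpos b (right_mem_Icc.2 hab)) (hfpos a (left_mem_Icc.2 hab))
  rw [integral_decayRate_eq_log_div hab hfc hf (fun x hx => (hfpos x hx).ne') hμ,
    ← Real.log_inv, inv_div, Real.exp_log hratio]

theorem tendsto_integral_decayRate_atTop (hab : a < b) (hfc : ContinuousOn f (Ico a b))
    (hf : ∀ x ∈ Ioo a b, HasDerivAt f (-μ x * f x) x) (hfpos : ∀ x ∈ Ico a b, 0 < f x)
    (hμ : ∀ x ∈ Ico a b, IntervalIntegrable μ volume a x) (hlim : Tendsto f (𝓝[<] b) (𝓝 0)) :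
    Tendsto (fun x => ∫ s in a..x, μ s) (𝓝[<] b) atTop := by
  have hexp : ∀ᶠ x in 𝓝[<] b, f x / f a = Real.exp (-∫ s in a..x, μ s) := by
    filter_upwards [Ico_mem_nhdsLT hab] with x hx
    have hIcc : Icc a x ⊆ Ico a b := Icc_subset_Ico_right hx.2
    exact (exp_neg_integral_decayRate hx.1 (hfc.mono hIcc)
      (fun y hy => hf y (Ioo_subset_Ioo_right hx.2.le hy)) (fun y hy => hfpos y (hIcc hy))
      (hμ x hx)).symm
  have hratio : Tendsto (fun x => f x / f a) (𝓝[<] b) (𝓝 0) := by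
    simpa only [zero_div] using hlim.div_const (f a)
  exact tendsto_neg_atBot_iff.1 (Real.tendsto_exp_comp_nhds_zero.1 (hratio.congr' hexp))

end DecayRate

theorem stmt4_general {f f' μ : ℝ → ℝ} {a b : ℝ} (hab : a < b) (hfc : ContinuousOn f (Icc a b))
    (hf' : ∀ x ∈ Ioo a b, HasDerivAt f (f' x) x) (hfpos : ∀ x ∈ Ico a b, 0 < f x)
    (hf'neg : ∀ x ∈ Ioo a b, f' x < 0) (hfb : f b = 0) (hμ : ∀ x ∈ Ioo a b, μ x = -f' x / f x) :
    (∀ x ∈ Ioo a b, 0 < μ x) ∧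
    (∀ x ∈ Ico a b, IntervalIntegrable μ volume a x) ∧
    (∀ x ∈ Ico a b, ∫ s in a..x, μ s = Real.log (f a / f x)) ∧
    Tendsto (fun x => ∫ s in a..x, μ s) (𝓝[<] b) atTop ∧
    (∀ x ∈ Ico a b, Real.exp (-∫ s in a..x, μ s) = f x / f a) ∧
    (∀ lam p₀s : ℝ, f a = lam * p₀s →
      ∀ x ∈ Ico a b, lam * p₀s * Real.exp (-∫ s in a..x, μ s) = f x) := by
  have hμpos : ∀ x ∈ Ioo a b, 0 < μ x := fun x hx => by
    rw [hμ x hx]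
    exact div_pos (neg_pos.2 (hf'neg x hx)) (hfpos x (Ioo_subset_Ico_self hx))
  have hdecay : ∀ x ∈ Ioo a b, HasDerivAt f (-μ x * f x) x := fun x hx => by
    have hfx : f x ≠ 0 := (hfpos x (Ioo_subset_Ico_self hx)).ne'
    simpa only [hμ x hx, neg_div, neg_neg, div_mul_cancel₀ _ hfx] using hf' x hx
  have hIcc {x : ℝ} (hx : x ∈ Ico a b) : Icc a x ⊆ Ico a b := Icc_subset_Ico_right hx.2
  have hIoo {x : ℝ} (hx : x ∈ Ico a b) : Ioo a x ⊆ Ioo a b := Ioo_subset_Ioo_right hx.2.le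
  have hfc' : ContinuousOn f (Ico a b) := hfc.mono Ico_subset_Icc_self
  have hint : ∀ x ∈ Ico a b, IntervalIntegrable μ volume a x := fun x hx =>
    intervalIntegrable_decayRate hx.1 (hfc'.mono (hIcc hx)) (fun y hy => hdecay y (hIoo hx hy))
      (fun y hy => (hfpos y (hIcc hx hy)).ne') (fun y hy => (hμpos y (hIoo hx hy)).le)
  have hlim : Tendsto f (𝓝[<] b) (𝓝 0) := by
    simpa only [hfb, nhdsWithin_Ico_eq_nhdsLT hab] using
      ((hfc b (right_mem_Icc.2 hab.le)).mono Ico_subset_Icc_self).tendsto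
  have hexp : ∀ x ∈ Ico a b, Real.exp (-∫ s in a..x, μ s) = f x / f a := fun x hx =>
    exp_neg_integral_decayRate hx.1 (hfc'.mono (hIcc hx)) (fun y hy => hdecay y (hIoo hx hy))
      (fun y hy => hfpos y (hIcc hx hy)) (hint x hx)
  refine ⟨hμpos, hint, fun x hx => ?_,
    tendsto_integral_decayRate_atTop hab hfc' hdecay hfpos hint hlim, hexp, ?_⟩
  · exact integral_decayRate_eq_log_div hx.1 (hfc'.mono (hIcc hx))
      (fun y hy => hdecay y (hIoo hx hy)) (fun y hy => (hfpos y (hIcc hx hy)).ne') (hint x hx)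
  · intro lam p₀s hfa x hx
    rw [hexp x hx, ← hfa, mul_div_cancel₀ _ (hfpos a (left_mem_Ico.2 hab)).ne']

/-- The time-independent repair rate `μ = −f′/f` built from a desired failure-mode density `f`
is positive, integrable on `[0,l]` for `l < L`, has divergent integral as `x → L⁻`, and
reproduces `f` as the steady-state profile. -/
theorem stmt4 (L : ℝ) (hL : 0 < L) (f f' : ℝ → ℝ)
    (hfc : ContinuousOn f (Set.Icc 0 L))
    (hf' : ∀ x ∈ Set.Ico (0:ℝ) L, HasDerivWithinAt f (f' x) (Set.Ico 0 L) x)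
    (hf'c : ContinuousOn f' (Set.Ico 0 L))
    (hfpos : ∀ x ∈ Set.Ico (0:ℝ) L, 0 < f x)
    (hf'neg : ∀ x ∈ Set.Ioo (0:ℝ) L, f' x < 0)
    (hfL : f L = 0)
    (μ : ℝ → ℝ) (hμ : ∀ x ∈ Set.Ico (0:ℝ) L, μ x = -f' x / f x) :
    (∀ x ∈ Set.Ioo (0:ℝ) L, 0 < μ x) ∧
    (∀ l ∈ Set.Ioo (0:ℝ) L, ∫ s in (0:ℝ)..l, μ s = Real.log (f 0 / f l)) ∧
    Filter.Tendsto (fun x => ∫ s in (0:ℝ)..x, μ s) (nhdsWithin L (Set.Iio L)) Filter.atTop ∧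
    (∀ x ∈ Set.Ico (0:ℝ) L, Real.exp (-∫ s in (0:ℝ)..x, μ s) = f x / f 0) ∧
    (∀ lam p₀s : ℝ, 0 < lam → 0 < p₀s → f 0 = lam * p₀s →
      ∀ x ∈ Set.Ico (0:ℝ) L, lam * p₀s * Real.exp (-∫ s in (0:ℝ)..x, μ s) = f x) := by
  obtain ⟨hμpos, -, hlog, hlim, hexp, hsteady⟩ := stmt4_general hL hfc
    (fun x hx => (hf' x (Ioo_subset_Ico_self hx)).hasDerivAt (Ico_mem_nhds hx.1 hx.2))
    hfpos hf'neg hfL (fun x hx => hμ x (Ioo_subset_Ico_self hx))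
  exact ⟨hμpos, fun l hl => hlog l (Ioo_subset_Ico_self hl), hlim, hexp,
    fun lam p₀s _ _ => hsteady lam p₀s⟩
end

section
/- Let L > 0, λ > 0, c > 0, let f : [0,L] → ℝ be continuously differentiable with f(x) > 0 for all x ∈ [0,L), and let p₀ : ℝ → ℝ be continuously differentiable. Define g(x) = 1/f(x), p̃(x) = (1/c) ∫₀ˣ f(s) ds, and p₁(x,t) = (f(x)/f(0)) · λ · p₀(t − p̃(x)) for x ∈ [0,L) and t ∈ ℝ. Then for all (x,t) ∈ (0,L) × ℝ, ∂p₁/∂t(x,t) = −c · ∂/∂x [ g(x) p₁(x,t) ], and p₁(0,t) = λ p₀(t) for all t ∈ ℝ. -/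
/-!
Since `g = 1 / f`, the factor `f x` of `p₁` cancels in the flux `g p₁`, which is therefore a
constant multiple of `b (t - p̃ x)` with `b = λ p₀`. Its `x`-derivative is `-p̃' x = -f x / c` times
its `t`-derivative, and multiplying by `-c` restores the factor `f x`.
-/

open Set Filter Topology

variable {E : Type*} [NormedAddCommGroup E] [NormedSpace ℝ E]

/-- The time `p̃ x` that a particle moving with speed `c / f` needs to get from `0` to `x`. -/
noncomputable def travelTime (c : ℝ) (f : ℝ → ℝ) (x : ℝ) : ℝ :=
  c⁻¹ * ∫ s in (0 : ℝ)..x, f s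

/-- The branch of the closed-loop solution determined by the values `b` at the boundary `x = 0`,
which reach `x` with delay `τ x`. For the failure-mode density, `b = λ p₀` and `τ = p̃`. -/
noncomputable def boundaryBranch (f τ : ℝ → ℝ) (b : ℝ → E) (x t : ℝ) : E :=
  (f x / f 0) • b (t - τ x)

theorem hasDerivAt_integral_of_continuousOn_Ico [CompleteSpace E] {u : ℝ → E} {a b x : ℝ}
    (hu : ContinuousOn u (Ico a b)) (hx : x ∈ Ioo a b) :
    HasDerivAt (fun y => ∫ s in a..y, u s) (u x) x := by
  have hint : IntervalIntegrable u MeasureTheory.volume a x :=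
    (hu.mono (Icc_subset_Ico_right hx.2)).intervalIntegrable_of_Icc hx.1.le
  have hmeas : StronglyMeasurableAtFilter u (𝓝 x) :=
    (hu.mono Ioo_subset_Ico_self).stronglyMeasurableAtFilter isOpen_Ioo x hx
  exact intervalIntegral.integral_hasDerivAt_right hint hmeas
    (hu.continuousAt (Ico_mem_nhds hx.1 hx.2))

theorem travelTime_zero (c : ℝ) (f : ℝ → ℝ) : travelTime c f 0 = 0 := by
  simp [travelTime]

theorem hasDerivAt_travelTime (c : ℝ) {f : ℝ → ℝ} {L x : ℝ} (hf : ContinuousOn f (Ico 0 L))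
    (hx : x ∈ Ioo 0 L) : HasDerivAt (travelTime c f) (c⁻¹ * f x) x :=
  (hasDerivAt_integral_of_continuousOn_Ico hf hx).const_mul c⁻¹

section boundaryBranch

variable {f τ : ℝ → ℝ} {b : ℝ → E} {b' : E} {τ' x t : ℝ}

theorem boundaryBranch_zero (hf : f 0 ≠ 0) (hτ : τ 0 = 0) (b : ℝ → E) :
    boundaryBranch f τ b 0 = b := by
  ext t
  rw [boundaryBranch, div_self hf, one_smul, hτ, sub_zero]

theorem inv_smul_boundaryBranch (hf : f x ≠ 0) :
    (f x)⁻¹ • boundaryBranch f τ b x t = (f 0)⁻¹ • b (t - τ x) := by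
  rw [boundaryBranch, smul_smul, div_eq_mul_inv, inv_mul_cancel_left₀ hf]

theorem hasDerivAt_boundaryBranch_time (f : ℝ → ℝ) (hb : HasDerivAt b b' (t - τ x)) :
    HasDerivAt (boundaryBranch f τ b x) ((f x / f 0) • b') t :=
  (hb.comp_sub_const t (τ x)).const_smul (f x / f 0)

theorem hasDerivAt_inv_smul_boundaryBranch (hf : ∀ᶠ y in 𝓝 x, f y ≠ 0)
    (hτ : HasDerivAt τ τ' x) (hb : HasDerivAt b b' (t - τ x)) :
    HasDerivAt (fun y => (f y)⁻¹ • boundaryBranch f τ b y t) ((f 0)⁻¹ • -τ' • b') x := by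
  have hdelayed : HasDerivAt (fun y => b (t - τ y)) (-τ' • b') x :=
    hb.scomp x (hτ.const_sub t)
  exact (hdelayed.const_smul (f 0)⁻¹).congr_of_eventuallyEq
    (hf.mono fun _ => inv_smul_boundaryBranch)

end boundaryBranch

theorem stmt9_general {L c : ℝ} (hL : 0 < L) (hc : c ≠ 0) {f : ℝ → ℝ}
    (hf : ContinuousOn f (Ico 0 L)) (hf_ne : ∀ x ∈ Ico 0 L, f x ≠ 0)
    {b : ℝ → E} (hb : Differentiable ℝ b) :
    (∀ x ∈ Ioo 0 L, ∀ t : ℝ, ∃ pt q : E,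
      HasDerivAt (fun s => boundaryBranch f (travelTime c f) b x s) pt t ∧
      HasDerivAt (fun y => (f y)⁻¹ • boundaryBranch f (travelTime c f) b y t) q x ∧
      pt = -c • q) ∧
    (∀ t : ℝ, boundaryBranch f (travelTime c f) b 0 t = b t) := by
  refine ⟨fun x hx t => ?_, congrFun <|
    boundaryBranch_zero (hf_ne 0 (left_mem_Ico.2 hL)) (travelTime_zero c f) b⟩
  have hne : ∀ᶠ y in 𝓝 x, f y ≠ 0 :=
    eventually_of_mem (Ico_mem_nhds hx.1 hx.2) hf_ne
  have hb' := (hb (t - travelTime c f x)).hasDerivAt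
  refine ⟨_, _, hasDerivAt_boundaryBranch_time f hb',
    hasDerivAt_inv_smul_boundaryBranch hne (hasDerivAt_travelTime c hf hx) hb', ?_⟩
  have hcoeff : f x / f 0 = -c * ((f 0)⁻¹ * -(c⁻¹ * f x)) := by field_simp
  rw [smul_smul, smul_smul, hcoeff, mul_assoc]

/-- The boundary-determined branch `p₁(x,t) = (f(x)/f(0)) λ p₀(t − p̃(x))` solves the
closed-loop equation `∂p₁/∂t = −c ∂(g(x)p₁)/∂x` with `g = 1/f`, together with the boundary
condition `p₁(0,t) = λ p₀(t)`. -/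
theorem stmt9 (L lam c : ℝ) (hL : 0 < L) (hlam : 0 < lam) (hc : 0 < c)
    (f : ℝ → ℝ) (hf : ContDiffOn ℝ 1 f (Set.Icc 0 L))
    (hfpos : ∀ x ∈ Set.Ico (0:ℝ) L, 0 < f x)
    (p₀ : ℝ → ℝ) (hp₀ : ContDiff ℝ 1 p₀)
    (g ptilde : ℝ → ℝ) (hg : ∀ x, g x = 1 / f x)
    (hpt : ∀ x, ptilde x = (1 / c) * ∫ s in (0:ℝ)..x, f s)
    (p₁ : ℝ → ℝ → ℝ)
    (hp₁ : ∀ x t : ℝ, p₁ x t = (f x / f 0) * lam * p₀ (t - ptilde x)) :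
    (∀ x ∈ Set.Ioo (0:ℝ) L, ∀ t : ℝ, ∃ pt q : ℝ,
      HasDerivAt (fun τ => p₁ x τ) pt t ∧
      HasDerivAt (fun y => g y * p₁ y t) q x ∧ pt = -c * q) ∧
    (∀ t : ℝ, p₁ 0 t = lam * p₀ t) := by
  simpa only [hg, hp₁, hpt, one_div, boundaryBranch, travelTime, smul_eq_mul, mul_assoc] using
    stmt9_general hL hc.ne' (hf.continuousOn.mono Ico_subset_Icc_self)
      (fun x hx => (hfpos x hx).ne') ((hp₀.differentiable one_ne_zero).const_mul lam)
end

section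
/- Let L > 0, λ > 0, c > 0, let f : [0,L] → ℝ be continuous with f(x) > 0 for x ∈ [0,L), define p̃(x) = (1/c) ∫₀ˣ f(s) ds and T = p̃(L). Let p₀ : ℝ → ℝ be bounded and continuous, differentiable on (T,∞), satisfying p₀′(t) = c (λ/f(0)) ( p₀(t − T) − p₀(t) ) for all t > T. Define p₁(x,t) = (f(x)/f(0)) λ p₀(t − p̃(x)). Then for every t > 2T and every h > 0, ∫₀^L | p₁(x, t + h) − p₁(x, t) | dx ≤ 2 c² (λ/f(0))² · T · h · sup_{s ≥ 0} |p₀(s)|. -/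
/-
The delay equation `y'(t) = c k (y(t - T) - y(t))`, with `k = λ / f(0)`, bounds `‖y'‖` on `(T, ∞)`
by `2 c k sup ‖y‖`, so `y` is Lipschitz there. Since the rescaled time takes values at most `T` on
`[0, L]`, for `t > 2T` the density at `x` sees `y` only at arguments beyond `T`, and its increment
is the weight `k f(x)` times a Lipschitz-bounded increment of `y`. Integrating in `x` turns the
weight into `k ∫ f = k c T`.
-/

open MeasureTheory Set

section WeightedIntegral

variable {α 𝕜 E : Type*} [MeasurableSpace α] {μ : Measure α} [NormedField 𝕜]
  [SeminormedAddCommGroup E] [NormedSpace 𝕜 E]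

theorem integral_norm_smul_le_of_norm_le {w : α → 𝕜} {v : α → E} {K : ℝ} (hw : Integrable w μ)
    (hv : ∀ᵐ x ∂μ, ‖v x‖ ≤ K) : ∫ x, ‖w x • v x‖ ∂μ ≤ (∫ x, ‖w x‖ ∂μ) * K := by
  rw [← integral_mul_const]
  refine integral_mono_of_nonneg (.of_forall fun _ => norm_nonneg _) (hw.norm.mul_const K) ?_
  filter_upwards [hv] with x hx
  rw [norm_smul]
  gcongr

end WeightedIntegral

theorem ae_nonneg_restrict_Ioc_of_forall_mem_Ioo {f : ℝ → ℝ} {a b : ℝ}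
    (hf : ∀ x ∈ Ioo a b, 0 ≤ f x) : 0 ≤ᵐ[volume.restrict (Ioc a b)] f := by
  rw [← restrict_Ioo_eq_restrict_Ioc]
  exact ae_restrict_of_forall_mem measurableSet_Ioo hf

/-- The rescaled repair time `p̃(x) = (1/c) ∫₀ˣ f(s) ds` needed by the feedback law with control
weight `c` to transport the failure mode from repair time `0` to `x`. -/
noncomputable def rescaledTime (c : ℝ) (f : ℝ → ℝ) (x : ℝ) : ℝ :=
  (1 / c) * ∫ s in (0 : ℝ)..x, f s

section RescaledTime

variable {c L : ℝ} {f : ℝ → ℝ}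

theorem rescaledTime_nonneg (hc : 0 ≤ c) (hL : 0 ≤ L)
    (hf : 0 ≤ᵐ[volume.restrict (Ioc 0 L)] f) : 0 ≤ rescaledTime c f L := by
  rw [rescaledTime, intervalIntegral.integral_of_le hL]
  exact mul_nonneg (one_div_nonneg.mpr hc) (setIntegral_nonneg_of_ae_restrict hf)

theorem monotoneOn_rescaledTime (hc : 0 ≤ c) (hfi : IntervalIntegrable f volume 0 L)
    (hf : 0 ≤ᵐ[volume.restrict (Ioc 0 L)] f) : MonotoneOn (rescaledTime c f) (Icc 0 L) :=
  fun _ hx _ hy hxy => mul_le_mul_of_nonneg_left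
    (intervalIntegral.integral_mono_interval le_rfl hx.1 hxy
      (ae_restrict_of_ae_restrict_of_subset (Ioc_subset_Ioc_right hy.2) hf)
      (hfi.mono_set (uIcc_subset_uIcc_left (Icc_subset_uIcc hy))))
    (one_div_nonneg.mpr hc)

theorem integral_eq_mul_rescaledTime (hc : c ≠ 0) :
    ∫ s in (0 : ℝ)..L, f s = c * rescaledTime c f L := by
  rw [rescaledTime, ← mul_assoc, mul_one_div_cancel hc, one_mul]

end RescaledTime

section DelayEquation

variable {E : Type*} [NormedAddCommGroup E] [NormedSpace ℝ E]

theorem norm_sub_le_of_hasDerivAt_delay {y : ℝ → E} {a T C : ℝ} (hT : 0 ≤ T)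
    (hy : ∀ t > T, HasDerivAt y (a • (y (t - T) - y t)) t) (hC : ∀ s ≥ 0, ‖y s‖ ≤ C)
    {s t : ℝ} (hs : T < s) (ht : T < t) : ‖y t - y s‖ ≤ |a| * (2 * C) * |t - s| := by
  have norm_deriv_le : ∀ r ∈ Ioi T, ‖a • (y (r - T) - y r)‖ ≤ |a| * (2 * C) := fun r hr => by
    rw [norm_smul, Real.norm_eq_abs, two_mul]
    gcongr
    exact norm_sub_le_of_le (hC _ (sub_nonneg.mpr hr.le)) (hC _ (hT.trans hr.le))
  exact (convex_Ioi T).norm_image_sub_le_of_norm_hasDerivWithin_le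
    (fun r hr => (hy r hr).hasDerivWithinAt) norm_deriv_le hs ht

/-- The failure-mode density `p₁(x, t) = k f(x) y(t - p̃(x))` produced by the good mode `y`. The
factor `k` stands for `g(0) λ = λ / f(0)`. -/
noncomputable def failureDensity (k c : ℝ) (f : ℝ → ℝ) (y : ℝ → E) (x t : ℝ) : E :=
  (k * f x) • y (t - rescaledTime c f x)

theorem failureDensity_sub (k c : ℝ) (f : ℝ → ℝ) (y : ℝ → E) (x s t : ℝ) :
    failureDensity k c f y x t - failureDensity k c f y x s =
      (k * f x) • (y (t - rescaledTime c f x) - y (s - rescaledTime c f x)) :=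
  (smul_sub ..).symm

theorem integral_norm_failureDensity_sub_le {k c L K s t : ℝ} {f : ℝ → ℝ} {y : ℝ → E}
    (hc : c ≠ 0) (hL : 0 ≤ L) (hfi : IntervalIntegrable f volume 0 L)
    (hf : 0 ≤ᵐ[volume.restrict (Ioc 0 L)] f)
    (hK : ∀ x ∈ Ioc 0 L, ‖y (t - rescaledTime c f x) - y (s - rescaledTime c f x)‖ ≤ K) :
    ∫ x in (0 : ℝ)..L, ‖failureDensity k c f y x t - failureDensity k c f y x s‖ ≤
      |k| * (c * rescaledTime c f L) * K := by
  have integral_weight :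
      ∫ x in Ioc 0 L, ‖k * f x‖ = |k| * (c * rescaledTime c f L) := by
    rw [← integral_eq_mul_rescaledTime hc, intervalIntegral.integral_of_le hL,
      ← integral_const_mul]
    refine integral_congr_ae ?_
    filter_upwards [hf] with x hx
    rw [norm_mul, Real.norm_eq_abs, Real.norm_of_nonneg hx]
  simp only [failureDensity_sub]
  rw [intervalIntegral.integral_of_le hL, ← integral_weight]
  exact integral_norm_smul_le_of_norm_le (hfi.1.const_mul k)
    (ae_restrict_of_forall_mem measurableSet_Ioc hK)

theorem stmt13_general {k c L C : ℝ} {f : ℝ → ℝ} {y : ℝ → E} (hc : 0 < c) (hL : 0 ≤ L)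
    (hfi : IntervalIntegrable f volume 0 L) (hf : 0 ≤ᵐ[volume.restrict (Ioc 0 L)] f)
    (hy : ∀ t > rescaledTime c f L,
      HasDerivAt y ((c * k) • (y (t - rescaledTime c f L) - y t)) t)
    (hC : ∀ s ≥ 0, ‖y s‖ ≤ C) {s t : ℝ} (hs : 2 * rescaledTime c f L < s)
    (ht : 2 * rescaledTime c f L < t) :
    ∫ x in (0 : ℝ)..L, ‖failureDensity k c f y x t - failureDensity k c f y x s‖ ≤
      2 * c ^ 2 * k ^ 2 * rescaledTime c f L * |t - s| * C := by
  have increment_le : ∀ x ∈ Ioc 0 L,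
      ‖y (t - rescaledTime c f x) - y (s - rescaledTime c f x)‖ ≤
        |c * k| * (2 * C) * |t - s| := fun x hx => by
    have time_le : rescaledTime c f x ≤ rescaledTime c f L :=
      monotoneOn_rescaledTime hc.le hfi hf (Ioc_subset_Icc_self hx) (right_mem_Icc.mpr hL) hx.2
    simpa only [sub_sub_sub_cancel_right] using
      norm_sub_le_of_hasDerivAt_delay (rescaledTime_nonneg hc.le hL hf) hy hC
        (s := s - rescaledTime c f x) (t := t - rescaledTime c f x) (by linarith) (by linarith)
  calc
    _ ≤ |k| * (c * rescaledTime c f L) * (|c * k| * (2 * C) * |t - s|) :=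
      integral_norm_failureDensity_sub_le hc.ne' hL hfi hf increment_le
    _ = 2 * c ^ 2 * k ^ 2 * rescaledTime c f L * |t - s| * C := by
      rw [abs_mul, abs_of_pos hc, ← sq_abs k]
      ring

end DelayEquation

/-- `L¹`-in-repair-time equicontinuity estimate of the closed-loop failure-mode density
`p₁(x,t) = (f(x)/f(0)) λ p₀(t − p̃(x))` for `t > 2T`, where `p₀` solves the delay equation
`p₀′(t) = c (λ/f(0)) (p₀(t − T) − p₀(t))` for `t > T` and `T = p̃(L)`. -/
theorem stmt13 (L lam c : ℝ) (hL : 0 < L) (hlam : 0 < lam) (hc : 0 < c)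
    (f : ℝ → ℝ) (hfc : ContinuousOn f (Set.Icc 0 L))
    (hfpos : ∀ x ∈ Set.Ico (0:ℝ) L, 0 < f x)
    (ptilde : ℝ → ℝ) (hpt : ∀ x, ptilde x = (1 / c) * ∫ s in (0:ℝ)..x, f s)
    (T : ℝ) (hT : T = ptilde L)
    (p₀ : ℝ → ℝ) (hp₀c : Continuous p₀)
    (hode : ∀ t > T, HasDerivAt p₀ (c * (lam / f 0) * (p₀ (t - T) - p₀ t)) t)
    (C : ℝ) (hbdd : ∀ s ≥ (0:ℝ), |p₀ s| ≤ C)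
    (p₁ : ℝ → ℝ → ℝ)
    (hp₁ : ∀ x t : ℝ, p₁ x t = (f x / f 0) * lam * p₀ (t - ptilde x)) :
    ∀ t > 2 * T, ∀ h > (0:ℝ),
      (∫ x in (0:ℝ)..L, |p₁ x (t + h) - p₁ x t|) ≤
        2 * c ^ 2 * (lam / f 0) ^ 2 * T * h * C := by
  intro t ht h hh
  obtain rfl : ptilde = rescaledTime c f := funext hpt
  obtain rfl : p₁ = failureDensity (lam / f 0) c f p₀ := by
    ext x t
    rw [hp₁, failureDensity, smul_eq_mul, div_mul_comm]
  subst hT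
  have hf := ae_nonneg_restrict_Ioc_of_forall_mem_Ioo fun x hx => (hfpos x ⟨hx.1.le, hx.2⟩).le
  simpa only [add_sub_cancel_left, abs_of_pos hh, Real.norm_eq_abs] using
    stmt13_general hc hL.le (hfc.intervalIntegrable_of_Icc hL.le) hf hode hbdd ht
      (ht.trans (lt_add_of_pos_right t hh))
end
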